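/- arXiv:1804.02332 — 2 statements merged into one kernel-verified Lean document; each statement's English description precedes it below -/
import Mathlib

section
/- Let N ≥ 1, let a_1,…,a_N ≥ 0, let b_1,…,b_N > 0, set a = Σ_{j=1}^N a_j, and let u_0 ∈ ℝ. Define Z = 1 + Σ_{i=1}^N (1/b_i)·Σ_{j=i}^N a_j and the vector μ ∈ ℝ^{N+1} by μ = (u_0/Z)·(1, (a_1+⋯+a_N)/b_1, (a_2+⋯+a_N)/b_2, …, a_N/b_N). Then A* μ = 0 and Σ_{i=0}^N μ_i = u_0; i.e., μ is a stationary vector of total mass u_0 for the loop Markov generator. -/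
open Finset

/-!
Read the loop as a chain of fluxes: level `i ≥ 1` receives `a i * x 0` from the base state and
passes `b i * x i` down to level `i - 1`. Everything injected at level `i` or above must pass
through level `i` on its way down, so `x` is stationary as soon as
`b i * x i = (a i + ⋯ + a N) * x 0` at every level. The weights solve this with `x 0 = 1`, and `Z`
is their total.
-/

section Generator

variable {R : Type*} [Ring R] {N : ℕ} {a b x : ℕ → R}

/-- The matrix `A*` of the loop Markov generator, with injection rates `a 1, …, a N` from the base
state `0` and descent rates `b 1, …, b N`. It acts on column vectors, so its columns sum to zero.
The rates are indexed by `ℕ`; only their values on `1, …, N` matter. -/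
def loopGenerator (N : ℕ) (a b : ℕ → R) : Matrix (Fin (N + 1)) (Fin (N + 1)) R :=
  Matrix.of fun i j =>
    if (i : ℕ) = 0 ∧ (j : ℕ) = 0 then -(∑ k ∈ Icc 1 N, a k)
    else if (i : ℕ) = 0 ∧ (j : ℕ) = 1 then b 1
    else if (j : ℕ) = 0 then a i
    else if (i : ℕ) = (j : ℕ) then -(b i)
    else if (j : ℕ) = (i : ℕ) + 1 then b j
    else 0

theorem loopGenerator_apply (i j : Fin (N + 1)) :
    loopGenerator N a b i j =
      (if (j : ℕ) = 0 then (if (i : ℕ) = 0 then -(∑ k ∈ Icc 1 N, a k) else a i) else 0)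
        + (if (j : ℕ) = i then (if (i : ℕ) = 0 then 0 else -(b i)) else 0)
        + (if (j : ℕ) = i + 1 then b (i + 1) else 0) := by
  simp only [loopGenerator, Matrix.of_apply]
  grind

theorem loopGenerator_mulVec_apply (i : Fin (N + 1)) :
    (loopGenerator N a b).mulVec (fun j => x j) i =
      (if (i : ℕ) = 0 then -(∑ k ∈ Icc 1 N, a k) * x 0 else a i * x 0 - b i * x i)
        + (if (i : ℕ) < N then b (i + 1) * x (i + 1) else 0) := by
  simp only [Matrix.mulVec, dotProduct, loopGenerator_apply]
  rw [Fin.sum_univ_eq_sum_range (fun j : ℕ =>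
    ((if j = 0 then (if (i : ℕ) = 0 then -(∑ k ∈ Icc 1 N, a k) else a i) else 0)
      + (if j = i then (if (i : ℕ) = 0 then 0 else -(b i)) else 0)
      + (if j = i + 1 then b (i + 1) else 0)) * x j)]
  simp only [add_mul, ite_mul, zero_mul, sum_add_distrib, sum_ite_eq', mem_range, i.isLt,
    Nat.succ_pos, if_true, Nat.add_lt_add_iff_right]
  split_ifs <;> simp [sub_eq_add_neg]

theorem loopGenerator_mulVec_eq_zero_of_flux
    (hflux : ∀ i ∈ Icc 1 N, b i * x i = (∑ j ∈ Icc i N, a j) * x 0) :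
    (loopGenerator N a b).mulVec (fun i => x i) = 0 := by
  ext i
  have hinflow : (if (i : ℕ) < N then b (i + 1) * x (i + 1) else 0)
      = (∑ j ∈ Icc ((i : ℕ) + 1) N, a j) * x 0 := by
    split_ifs with hi
    · exact hflux _ (mem_Icc.2 ⟨Nat.succ_pos _, hi⟩)
    · rw [Icc_eq_empty (by omega), sum_empty, zero_mul]
  rw [loopGenerator_mulVec_apply, hinflow, Pi.zero_apply]
  split_ifs with hi
  · rw [hi, zero_add, neg_mul, neg_add_cancel]
  · have hiN : (i : ℕ) ≤ N := i.is_le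
    rw [hflux i (mem_Icc.2 ⟨Nat.one_le_iff_ne_zero.2 hi, hiN⟩), ← add_sum_Ioc_eq_sum_Icc hiN,
      ← Icc_add_one_left_eq_Ioc, add_mul]
    abel

end Generator

section StationaryVector

variable {K : Type*} [Field K] {N : ℕ} {a b : ℕ → K}

/-- The unnormalized stationary weights of the loop, scaled so that the base state has weight `1`.
As for the rates, only the values on `0, …, N` matter. -/
def loopWeight (N : ℕ) (a b : ℕ → K) (i : ℕ) : K :=
  if i = 0 then 1 else (∑ j ∈ Icc i N, a j) / b i

/-- The normalizing constant `Z` of the loop: the total of the weights `loopWeight N a b`. -/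
def loopNormalizer (N : ℕ) (a b : ℕ → K) : K :=
  1 + ∑ i ∈ Icc 1 N, (1 / b i) * ∑ j ∈ Icc i N, a j

/-- The stationary vector `μ` of the loop: the weights `loopWeight N a b` rescaled to total
mass `u₀`. -/
def loopStationaryVector (N : ℕ) (a b : ℕ → K) (u₀ : K) (i : Fin (N + 1)) : K :=
  u₀ / loopNormalizer N a b * loopWeight N a b i

theorem mul_loopWeight {i : ℕ} (hi : i ≠ 0) (hb : b i ≠ 0) :
    b i * loopWeight N a b i = ∑ j ∈ Icc i N, a j := by
  rw [loopWeight, if_neg hi, mul_div_cancel₀ _ hb]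

theorem sum_loopWeight :
    ∑ i : Fin (N + 1), loopWeight N a b i = loopNormalizer N a b := by
  rw [Fin.sum_univ_eq_sum_range (loopWeight N a b), range_eq_Ico,
    sum_eq_sum_Ico_succ_bot N.add_one_pos, zero_add, Ico_add_one_right_eq_Icc, loopNormalizer]
  refine congrArg₂ (· + ·) (if_pos rfl) (sum_congr rfl fun i hi => ?_)
  rw [loopWeight, if_neg (Nat.one_le_iff_ne_zero.1 (mem_Icc.1 hi).1), one_div_mul_eq_div]

theorem loopGenerator_mulVec_loopWeight (hb : ∀ j ∈ Icc 1 N, b j ≠ 0) :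
    (loopGenerator N a b).mulVec (fun i => loopWeight N a b i) = 0 :=
  loopGenerator_mulVec_eq_zero_of_flux fun i hi => by
    rw [mul_loopWeight (Nat.one_le_iff_ne_zero.1 (mem_Icc.1 hi).1) (hb i hi), loopWeight,
      if_pos rfl, mul_one]

theorem loopGenerator_mulVec_loopStationaryVector (hb : ∀ j ∈ Icc 1 N, b j ≠ 0) (u₀ : K) :
    (loopGenerator N a b).mulVec (loopStationaryVector N a b u₀) = 0 := by
  change (loopGenerator N a b).mulVec
    ((u₀ / loopNormalizer N a b) • fun i : Fin (N + 1) => loopWeight N a b i) = 0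
  rw [Matrix.mulVec_smul, loopGenerator_mulVec_loopWeight hb, smul_zero]

theorem sum_loopStationaryVector (hZ : loopNormalizer N a b ≠ 0) (u₀ : K) :
    ∑ i, loopStationaryVector N a b u₀ i = u₀ := by
  simp only [loopStationaryVector]
  rw [← mul_sum, sum_loopWeight, div_mul_cancel₀ _ hZ]

theorem loopNormalizer_pos [LinearOrder K] [IsStrictOrderedRing K]
    (ha : ∀ j ∈ Icc 1 N, 0 ≤ a j) (hb : ∀ j ∈ Icc 1 N, 0 ≤ b j) :
    0 < loopNormalizer N a b := by
  refine add_pos_of_pos_of_nonneg one_pos (sum_nonneg fun i hi => ?_)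
  refine mul_nonneg (one_div_nonneg.2 (hb i hi)) (sum_nonneg fun j hj => ha j ?_)
  exact Icc_subset_Icc_left (mem_Icc.1 hi).1 hj

end StationaryVector

theorem stmt_2_general {K : Type*} [Field K] (N : ℕ) (a b : ℕ → K) (u₀ : K)
    (hb : ∀ j ∈ Icc 1 N, b j ≠ 0) (hZ : loopNormalizer N a b ≠ 0) :
    (loopGenerator N a b).mulVec (loopStationaryVector N a b u₀) = 0 ∧
      ∑ i, loopStationaryVector N a b u₀ i = u₀ :=
  ⟨loopGenerator_mulVec_loopStationaryVector hb u₀, sum_loopStationaryVector hZ u₀⟩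

/-- **Stationary state of the loop Markov generator.**  The explicitly given vector `μ`
satisfies `A* μ = 0` and has total mass `u₀`. -/
theorem stmt_2 (N : ℕ) (hN : 1 ≤ N) (a b : ℕ → ℝ) (u₀ : ℝ)
    (ha : ∀ j ∈ Finset.Icc 1 N, 0 ≤ a j)
    (hb : ∀ j ∈ Finset.Icc 1 N, 0 < b j)
    (Astar : Matrix (Fin (N + 1)) (Fin (N + 1)) ℝ)
    (hA : Astar = Matrix.of fun i j : Fin (N + 1) =>
      if (i : ℕ) = 0 ∧ (j : ℕ) = 0 then -(∑ k ∈ Finset.Icc 1 N, a k)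
      else if (i : ℕ) = 0 ∧ (j : ℕ) = 1 then b 1
      else if (j : ℕ) = 0 then a (i : ℕ)
      else if (i : ℕ) = (j : ℕ) then -(b (i : ℕ))
      else if (j : ℕ) = (i : ℕ) + 1 then b (j : ℕ)
      else 0)
    (Z : ℝ)
    (hZ : Z = 1 + ∑ i ∈ Finset.Icc 1 N, (1 / b i) * ∑ j ∈ Finset.Icc i N, a j)
    (μ : Fin (N + 1) → ℝ)
    (hμ : μ = fun i : Fin (N + 1) =>
      u₀ / Z * (if (i : ℕ) = 0 then 1 else (∑ j ∈ Finset.Icc (i : ℕ) N, a j) / b (i : ℕ))) :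
    Astar.mulVec μ = 0 ∧ ∑ i : Fin (N + 1), μ i = u₀ := by
  subst hA hZ hμ
  exact stmt_2_general N a b u₀ (fun j hj => (hb j hj).ne')
    (loopNormalizer_pos ha fun j hj => (hb j hj).le).ne'
end

section
/- Let N ≥ 1, let a_1,…,a_N ≥ 0, let b_1,…,b_N > 0 be pairwise distinct, set a = Σ_{j=1}^N a_j, and let u : [0,∞) → ℝ be differentiable with u'(t) = −a·u(t) + ∫_0^t K(t−s)·u(s) ds for all t ≥ 0 and u(0) = u_0. Then u(t) converges as t → ∞ to u_∞ = u_0/Z, where Z = 1 + Σ_{i=1}^N (1/b_i)·Σ_{j=i}^N a_j. -/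
open MeasureTheory Finset

/-!
With `x₀ = u` and `xⱼ = Kⱼ * u` (convolution), partial fractions turn the memory equation into the
linear chain `x₀' = ∑ aⱼ (xⱼ - x₀)`, `xⱼ' = bⱼ (xⱼ₋₁ - xⱼ)`. Its right-hand side is the generator of
a Markov jump process on `{0, …, N}` (jump `0 → j` at rate `aⱼ`, `j → j - 1` at rate `bⱼ`) with
invariant weights `w₀ = 1`, `wᵢ = bᵢ⁻¹ ∑_{j ≥ i} aⱼ`, whose total mass is `Z`. Hence `∑ wᵢ xᵢ` is
conserved, and the variance of `x` under `w` decreases at the rate given by the Dirichlet form. A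
Poincaré inequality bounds the variance by the Dirichlet form, so `x` converges exponentially fast
to its conserved mean `u₀ / Z`.
-/

section FiniteSums

variable {R : Type*} [CommRing R]

/-- The tail `∑_{i < j ≤ N} aⱼ`, indexed by the largest term that is left out. -/
def tailSum (a : ℕ → R) (N i : ℕ) : R := ∑ j ∈ Icc (i + 1) N, a j

lemma sum_tailSum_mul_sub (a g : ℕ → R) (N : ℕ) :
    ∑ i ∈ range N, tailSum a N i * (g i - g (i + 1)) = ∑ j ∈ Icc 1 N, a j * (g 0 - g j) := by
  simp_rw [tailSum, ← sum_range_sub', sum_mul, mul_sum]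
  refine sum_comm' fun i j ↦ ?_
  simp only [mem_range, mem_Icc]
  lia

lemma sum_mul_sub_sq_eq_add {ι : Type*} (s : Finset ι) (w f : ι → R) {c : R}
    (hc : ∑ i ∈ s, w i * f i = (∑ i ∈ s, w i) * c) (d : R) :
    ∑ i ∈ s, w i * (f i - d) ^ 2 =
      ∑ i ∈ s, w i * (f i - c) ^ 2 + (∑ i ∈ s, w i) * (c - d) ^ 2 := by
  have expand : ∑ i ∈ s, w i * (f i - d) ^ 2 = ∑ i ∈ s, w i * (f i - c) ^ 2 +
      2 * (c - d) * ∑ i ∈ s, w i * f i + (d ^ 2 - c ^ 2) * ∑ i ∈ s, w i := by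
    simp only [mul_sum, ← sum_add_distrib]
    exact sum_congr rfl fun i _ ↦ by ring
  rw [expand, hc]
  ring

variable [LinearOrder R] [IsStrictOrderedRing R]

lemma tailSum_nonneg {a : ℕ → R} {N : ℕ} (ha : ∀ j ∈ Icc 1 N, 0 ≤ a j) (i : ℕ) :
    0 ≤ tailSum a N i :=
  sum_nonneg fun j hj ↦ ha j (Icc_subset_Icc_left (Nat.le_add_left 1 i) hj)

lemma tailSum_antitone {a : ℕ → R} {N : ℕ} (ha : ∀ j ∈ Icc 1 N, 0 ≤ a j) :
    Antitone (tailSum a N) := fun i _ hij ↦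
  sum_le_sum_of_subset_of_nonneg (Icc_subset_Icc_left (Nat.succ_le_succ hij))
    fun j hj _ ↦ ha j (Icc_subset_Icc_left (Nat.le_add_left 1 i) hj)

lemma mul_sub_sq_le_mul_sum_of_antitone {A : ℕ → R} (hA : Antitone A) {n : ℕ} (hn : 0 ≤ A n)
    (f : ℕ → R) :
    A n * (f (n + 1) - f 0) ^ 2 ≤
      (n + 1) * ∑ k ∈ range (n + 1), A k * (f k - f (k + 1)) ^ 2 := by
  have cauchy_schwarz : (f (n + 1) - f 0) ^ 2 ≤
      (n + 1) * ∑ k ∈ range (n + 1), (f k - f (k + 1)) ^ 2 := by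
    have h := sq_sum_le_card_mul_sum_sq (s := range (n + 1)) (f := fun k ↦ f k - f (k + 1))
    rwa [sum_range_sub', card_range, Nat.cast_add_one, ← neg_sub (f (n + 1)), neg_sq] at h
  calc A n * (f (n + 1) - f 0) ^ 2
      ≤ A n * ((n + 1) * ∑ k ∈ range (n + 1), (f k - f (k + 1)) ^ 2) := by gcongr
    _ = (n + 1) * ∑ k ∈ range (n + 1), A n * (f k - f (k + 1)) ^ 2 := by
        rw [mul_left_comm, mul_sum]
    _ ≤ (n + 1) * ∑ k ∈ range (n + 1), A k * (f k - f (k + 1)) ^ 2 := by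
        gcongr with k hk
        exact hA (Nat.lt_succ_iff.1 (mem_range.1 hk))

end FiniteSums

section Chain

/-- The generator of the jump process on `{0, …, N}` that jumps from `0` to `j` at rate `aⱼ` and
from `i` to `i - 1` at rate `bᵢ`. -/
def chainGenerator (N : ℕ) (a b f : ℕ → ℝ) : ℕ → ℝ
  | 0 => ∑ j ∈ Icc 1 N, a j * (f j - f 0)
  | i + 1 => b (i + 1) * (f i - f (i + 1))

/-- The invariant weights of `chainGenerator`, normalised to be `1` at `0`. -/
noncomputable def chainWeight (N : ℕ) (a b : ℕ → ℝ) : ℕ → ℝ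
  | 0 => 1
  | i + 1 => tailSum a N i / b (i + 1)

/-- The Dirichlet form of the chain: the integral under `chainWeight` of the carré du champ
`i ↦ L((f - f i)²) i = L(f²) i - 2 f i (L f) i`, where `L` is the generator. -/
noncomputable def chainEnergy (N : ℕ) (a b f : ℕ → ℝ) : ℝ :=
  ∑ i ∈ range (N + 1), chainWeight N a b i * chainGenerator N a b (fun j ↦ (f j - f i) ^ 2) i

/-- The constant in the Poincaré inequality of the chain. The summand `1` only serves to make it
positive for `N = 0`. -/
noncomputable def chainPoincareConst (N : ℕ) (b : ℕ → ℝ) : ℝ :=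
  1 + ∑ i ∈ range N, N / b (i + 1)

variable {N : ℕ} {a b : ℕ → ℝ}

lemma sum_chainWeight_mul_eq_add (N : ℕ) (a b f : ℕ → ℝ) :
    ∑ i ∈ range (N + 1), chainWeight N a b i * f i =
      f 0 + ∑ i ∈ range N, tailSum a N i / b (i + 1) * f (i + 1) := by
  rw [sum_range_succ', add_comm, chainWeight, one_mul]
  simp only [chainWeight]

lemma sum_chainWeight (N : ℕ) (a b : ℕ → ℝ) :
    ∑ i ∈ range (N + 1), chainWeight N a b i =
      1 + ∑ i ∈ Icc 1 N, 1 / b i * ∑ j ∈ Icc i N, a j := by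
  have h := sum_chainWeight_mul_eq_add N a b fun _ ↦ 1
  simp only [mul_one] at h
  rw [h, ← Ico_add_one_right_eq_Icc, sum_Ico_eq_sum_range]
  simp only [tailSum, Nat.add_sub_cancel, add_comm 1, one_div_mul_eq_div]

lemma succ_mem_Icc_one {i : ℕ} (hi : i ∈ range N) : i + 1 ∈ Icc 1 N :=
  mem_Icc.2 ⟨Nat.le_add_left 1 i, mem_range.1 hi⟩

lemma sum_chainWeight_mul_chainGenerator_eq_add (hb : ∀ j ∈ Icc 1 N, b j ≠ 0) (g : ℕ → ℕ → ℝ) :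
    ∑ i ∈ range (N + 1), chainWeight N a b i * chainGenerator N a b (g i) i =
      ∑ j ∈ Icc 1 N, a j * (g 0 j - g 0 0) +
        ∑ i ∈ range N, tailSum a N i * (g (i + 1) i - g (i + 1) (i + 1)) := by
  rw [sum_chainWeight_mul_eq_add]
  simp only [chainGenerator]
  congr 1
  refine sum_congr rfl fun i hi ↦ ?_
  rw [← mul_assoc, div_mul_cancel₀ _ (hb _ (succ_mem_Icc_one hi))]

lemma sum_chainWeight_mul_chainGenerator (hb : ∀ j ∈ Icc 1 N, b j ≠ 0) (f : ℕ → ℝ) :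
    ∑ i ∈ range (N + 1), chainWeight N a b i * chainGenerator N a b f i = 0 := by
  rw [sum_chainWeight_mul_chainGenerator_eq_add hb fun _ ↦ f, sum_tailSum_mul_sub,
    ← sum_add_distrib]
  exact sum_eq_zero fun j _ ↦ by ring

lemma chainGenerator_sub_sq (N : ℕ) (a b f : ℕ → ℝ) (c : ℝ) (i : ℕ) :
    chainGenerator N a b (fun j ↦ (f j - c) ^ 2) i =
      2 * (f i - c) * chainGenerator N a b f i +
        chainGenerator N a b (fun j ↦ (f j - f i) ^ 2) i := by
  cases i with
  | zero =>
    simp only [chainGenerator, mul_sum, ← sum_add_distrib]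
    exact sum_congr rfl fun j _ ↦ by ring
  | succ i =>
    simp only [chainGenerator]
    ring

lemma sum_chainWeight_mul_sub_mul_chainGenerator (hb : ∀ j ∈ Icc 1 N, b j ≠ 0) (f : ℕ → ℝ)
    (c : ℝ) :
    ∑ i ∈ range (N + 1), chainWeight N a b i * (2 * (f i - c) * chainGenerator N a b f i) =
      -chainEnergy N a b f := by
  have invariance := sum_chainWeight_mul_chainGenerator (a := a) hb fun j ↦ (f j - c) ^ 2
  simp only [chainGenerator_sub_sq _ _ _ _ c, mul_add, sum_add_distrib] at invariance
  exact eq_neg_of_add_eq_zero_left invariance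

lemma chainWeight_nonneg (ha : ∀ j ∈ Icc 1 N, 0 ≤ a j) (hb : ∀ j ∈ Icc 1 N, 0 < b j) {i : ℕ}
    (hi : i ∈ range (N + 1)) : 0 ≤ chainWeight N a b i := by
  cases i with
  | zero => exact zero_le_one
  | succ i =>
    exact div_nonneg (tailSum_nonneg ha i)
      (hb _ (succ_mem_Icc_one (mem_range.2 (Nat.succ_lt_succ_iff.1 (mem_range.1 hi))))).le

lemma sum_chainWeight_pos (ha : ∀ j ∈ Icc 1 N, 0 ≤ a j) (hb : ∀ j ∈ Icc 1 N, 0 < b j) :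
    0 < ∑ i ∈ range (N + 1), chainWeight N a b i :=
  sum_pos' (fun _ ↦ chainWeight_nonneg ha hb) ⟨0, by simp, zero_lt_one⟩

lemma chainPoincareConst_pos (hb : ∀ j ∈ Icc 1 N, 0 < b j) : 0 < chainPoincareConst N b :=
  add_pos_of_pos_of_nonneg one_pos <| sum_nonneg fun _ hi ↦
    div_nonneg N.cast_nonneg (hb _ (succ_mem_Icc_one hi)).le

lemma sum_tailSum_mul_sub_sq_le_chainEnergy (ha : ∀ j ∈ Icc 1 N, 0 ≤ a j)
    (hb : ∀ j ∈ Icc 1 N, b j ≠ 0) (f : ℕ → ℝ) :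
    ∑ i ∈ range N, tailSum a N i * (f i - f (i + 1)) ^ 2 ≤ chainEnergy N a b f := by
  rw [chainEnergy, sum_chainWeight_mul_chainGenerator_eq_add hb fun i j ↦ (f j - f i) ^ 2]
  simp only [sub_self, zero_pow two_ne_zero, sub_zero]
  exact le_add_of_nonneg_left <| sum_nonneg fun j hj ↦ mul_nonneg (ha j hj) (sq_nonneg _)

lemma sum_chainWeight_mul_sub_sq_le_chainEnergy (ha : ∀ j ∈ Icc 1 N, 0 ≤ a j)
    (hb : ∀ j ∈ Icc 1 N, 0 < b j) (f : ℕ → ℝ) :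
    ∑ i ∈ range (N + 1), chainWeight N a b i * (f i - f 0) ^ 2 ≤
      chainPoincareConst N b * chainEnergy N a b f := by
  set D := ∑ k ∈ range N, tailSum a N k * (f k - f (k + 1)) ^ 2
  have term_nonneg (k : ℕ) : 0 ≤ tailSum a N k * (f k - f (k + 1)) ^ 2 :=
    mul_nonneg (tailSum_nonneg ha k) (sq_nonneg _)
  have D_nonneg : 0 ≤ D := sum_nonneg fun k _ ↦ term_nonneg k
  have D_le : D ≤ chainEnergy N a b f :=
    sum_tailSum_mul_sub_sq_le_chainEnergy ha (fun j hj ↦ (hb j hj).ne') f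
  have tail_bound {i : ℕ} (hi : i ∈ range N) :
      tailSum a N i * (f (i + 1) - f 0) ^ 2 ≤ N * D := by
    have hiN : i + 1 ≤ N := mem_range.1 hi
    have antitone_bound :=
      mul_sub_sq_le_mul_sum_of_antitone (tailSum_antitone ha) (tailSum_nonneg ha i) f
    exact antitone_bound.trans <| mul_le_mul (mod_cast hiN)
      (sum_le_sum_of_subset_of_nonneg (range_subset_range.2 hiN) fun k _ _ ↦ term_nonneg k)
      (sum_nonneg fun k _ ↦ term_nonneg k) N.cast_nonneg
  calc ∑ i ∈ range (N + 1), chainWeight N a b i * (f i - f 0) ^ 2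
      = ∑ i ∈ range N, tailSum a N i * (f (i + 1) - f 0) ^ 2 / b (i + 1) := by
        rw [sum_chainWeight_mul_eq_add N a b fun i ↦ (f i - f 0) ^ 2, sub_self,
          zero_pow two_ne_zero, zero_add]
        exact sum_congr rfl fun i _ ↦ div_mul_eq_mul_div _ _ _
    _ ≤ ∑ i ∈ range N, N * D / b (i + 1) :=
        sum_le_sum fun i hi ↦
          div_le_div_of_nonneg_right (tail_bound hi) (hb _ (succ_mem_Icc_one hi)).le
    _ = (∑ i ∈ range N, N / b (i + 1)) * D := by
        rw [sum_mul]
        exact sum_congr rfl fun i _ ↦ mul_div_right_comm _ _ _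
    _ ≤ chainPoincareConst N b * chainEnergy N a b f :=
        mul_le_mul (le_add_of_nonneg_left zero_le_one) D_le D_nonneg (chainPoincareConst_pos hb).le

lemma sum_chainWeight_mul_sub_mean_sq_le_chainEnergy (ha : ∀ j ∈ Icc 1 N, 0 ≤ a j)
    (hb : ∀ j ∈ Icc 1 N, 0 < b j) {f : ℕ → ℝ} {c : ℝ}
    (hc : ∑ i ∈ range (N + 1), chainWeight N a b i * f i =
      (∑ i ∈ range (N + 1), chainWeight N a b i) * c) :
    ∑ i ∈ range (N + 1), chainWeight N a b i * (f i - c) ^ 2 ≤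
      chainPoincareConst N b * chainEnergy N a b f := by
  refine le_trans ?_ (sum_chainWeight_mul_sub_sq_le_chainEnergy ha hb f)
  rw [sum_mul_sub_sq_eq_add _ _ _ hc (f 0)]
  exact le_add_of_nonneg_right (mul_nonneg (sum_chainWeight_pos ha hb).le (sq_nonneg _))

end Chain

section ChainFlow

lemma le_mul_exp_of_hasDerivWithinAt_le {W W' : ℝ → ℝ} {t₀ κ : ℝ}
    (hW : ∀ t ∈ Set.Ici t₀, HasDerivWithinAt W (W' t) (Set.Ici t₀) t)
    (hle : ∀ t ∈ Set.Ici t₀, W' t ≤ κ * W t) {t : ℝ} (ht : t₀ ≤ t) :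
    W t ≤ W t₀ * Real.exp (κ * (t - t₀)) := by
  rw [← gronwallBound_ε0]
  refine le_gronwallBound_of_liminf_deriv_right_le (f' := W')
    (fun s hs ↦ ((hW s hs.1).mono Set.Icc_subset_Ici_self).continuousWithinAt)
    (fun s hs r hr ↦ ?_) le_rfl (fun s hs ↦ (hle s hs.1).trans_eq (add_zero _).symm)
    t ⟨ht, le_rfl⟩
  exact ((hW s hs.1).mono (Set.Ici_subset_Ici.2 hs.1)).liminf_right_slope_le hr

/-- `x₀, …, x_N` solve on `[0, ∞)` the linear system `xᵢ' = (L x)ᵢ`, where `L` is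
`chainGenerator N a b`. -/
def IsChainSolution (N : ℕ) (a b : ℕ → ℝ) (x : ℕ → ℝ → ℝ) : Prop :=
  ∀ i ∈ range (N + 1), ∀ t ∈ Set.Ici (0 : ℝ),
    HasDerivWithinAt (x i) (chainGenerator N a b (fun j ↦ x j t) i) (Set.Ici 0) t

namespace IsChainSolution

variable {N : ℕ} {a b : ℕ → ℝ} {x : ℕ → ℝ → ℝ}

lemma sum_chainWeight_mul_eq (hx : IsChainSolution N a b x) (hb : ∀ j ∈ Icc 1 N, b j ≠ 0)
    {t : ℝ} (ht : 0 ≤ t) :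
    ∑ i ∈ range (N + 1), chainWeight N a b i * x i t =
      ∑ i ∈ range (N + 1), chainWeight N a b i * x i 0 := by
  have deriv_zero (s : ℝ) (hs : s ∈ Set.Ici 0) : HasDerivWithinAt
      (fun s ↦ ∑ i ∈ range (N + 1), chainWeight N a b i * x i s) 0 (Set.Ici 0) s :=
    (HasDerivWithinAt.fun_sum fun i hi ↦ (hx i hi s hs).const_mul _).congr_deriv
      (sum_chainWeight_mul_chainGenerator hb _)
  exact constant_of_has_deriv_right_zero
    (fun s hs ↦ ((deriv_zero s hs.1).mono Set.Icc_subset_Ici_self).continuousWithinAt)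
    (fun s hs ↦ (deriv_zero s hs.1).mono (Set.Ici_subset_Ici.2 hs.1)) t ⟨ht, le_rfl⟩

lemma hasDerivWithinAt_sum_chainWeight_mul_sub_sq (hx : IsChainSolution N a b x)
    (hb : ∀ j ∈ Icc 1 N, b j ≠ 0) (c : ℝ) {t : ℝ} (ht : t ∈ Set.Ici 0) :
    HasDerivWithinAt (fun t ↦ ∑ i ∈ range (N + 1), chainWeight N a b i * (x i t - c) ^ 2)
      (-chainEnergy N a b fun i ↦ x i t) (Set.Ici 0) t := by
  refine (HasDerivWithinAt.fun_sum fun i hi ↦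
    (((hx i hi t ht).sub_const c).fun_pow 2).const_mul _).congr_deriv ?_
  rw [← sum_chainWeight_mul_sub_mul_chainGenerator hb _ c]
  simp only [Nat.cast_ofNat, Nat.add_one_sub_one, pow_one]

lemma sum_chainWeight_mul_sub_sq_le_mul_exp (hx : IsChainSolution N a b x)
    (ha : ∀ j ∈ Icc 1 N, 0 ≤ a j) (hb : ∀ j ∈ Icc 1 N, 0 < b j) {c : ℝ}
    (hc : ∑ i ∈ range (N + 1), chainWeight N a b i * x i 0 =
      (∑ i ∈ range (N + 1), chainWeight N a b i) * c)
    {t : ℝ} (ht : 0 ≤ t) :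
    ∑ i ∈ range (N + 1), chainWeight N a b i * (x i t - c) ^ 2 ≤
      (∑ i ∈ range (N + 1), chainWeight N a b i * (x i 0 - c) ^ 2) *
        Real.exp (-(chainPoincareConst N b)⁻¹ * t) := by
  have hb₀ : ∀ j ∈ Icc 1 N, b j ≠ 0 := fun j hj ↦ (hb j hj).ne'
  have decay := le_mul_exp_of_hasDerivWithinAt_le (κ := -(chainPoincareConst N b)⁻¹)
    (fun s hs ↦ hx.hasDerivWithinAt_sum_chainWeight_mul_sub_sq hb₀ c hs) (fun s hs ↦ ?_) ht
  · rwa [sub_zero] at decay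
  rw [neg_mul, neg_le_neg_iff, inv_mul_le_iff₀ (chainPoincareConst_pos hb)]
  exact sum_chainWeight_mul_sub_mean_sq_le_chainEnergy ha hb
    ((hx.sum_chainWeight_mul_eq hb₀ hs).trans hc)

theorem tendsto_head (hx : IsChainSolution N a b x)
    (ha : ∀ j ∈ Icc 1 N, 0 ≤ a j) (hb : ∀ j ∈ Icc 1 N, 0 < b j) {c : ℝ}
    (hc : ∑ i ∈ range (N + 1), chainWeight N a b i * x i 0 =
      (∑ i ∈ range (N + 1), chainWeight N a b i) * c) :
    Filter.Tendsto (x 0) Filter.atTop (nhds c) := by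
  have sq_le_variance (t : ℝ) : (x 0 t - c) ^ 2 ≤
      ∑ i ∈ range (N + 1), chainWeight N a b i * (x i t - c) ^ 2 := by
    have head_le := single_le_sum (f := fun i ↦ chainWeight N a b i * (x i t - c) ^ 2)
      (fun i hi ↦ mul_nonneg (chainWeight_nonneg ha hb hi) (sq_nonneg _))
      (mem_range.2 N.succ_pos)
    rwa [chainWeight, one_mul] at head_le
  have bound_tendsto_zero : Filter.Tendsto
      (fun t ↦ (∑ i ∈ range (N + 1), chainWeight N a b i * (x i 0 - c) ^ 2) *
        Real.exp (-(chainPoincareConst N b)⁻¹ * t)) Filter.atTop (nhds 0) := by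
    have exponent_tendsto := Filter.tendsto_id.const_mul_atTop_of_neg
      (neg_neg_of_pos (inv_pos.2 (chainPoincareConst_pos hb)))
    simpa only [mul_zero, Function.comp_def, id] using
      (Real.tendsto_exp_atBot.comp exponent_tendsto).const_mul _
  have sq_tendsto_zero : Filter.Tendsto (fun t ↦ (x 0 t - c) ^ 2) Filter.atTop (nhds 0) :=
    squeeze_zero' (.of_forall fun t ↦ sq_nonneg _)
      ((Filter.eventually_ge_atTop 0).mono fun t ht ↦ (sq_le_variance t).trans
        (hx.sum_chainWeight_mul_sub_sq_le_mul_exp ha hb hc ht)) bound_tendsto_zero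
  rw [tendsto_iff_norm_sub_tendsto_zero]
  simpa only [Real.sqrt_sq_eq_abs, Real.sqrt_zero, Real.norm_eq_abs] using sq_tendsto_zero.sqrt

end IsChainSolution

end ChainFlow

section HypoexponentialKernel

variable {ι F : Type*} [DecidableEq ι] [Field F]

/-- The coefficient of `e^{-bᵢ t}` in the hypoexponential density with rates `(bₖ)_{k ∈ s}`. For
`s = {1, …, j}` it is the paper's `bᵢ ψᵢʲ`. -/
def hypoexpCoeff (s : Finset ι) (b : ι → F) (i : ι) : F :=
  b i * ∏ k ∈ s.erase i, b k / (b k - b i)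

lemma sub_mul_hypoexpCoeff_insert {s : Finset ι} {b : ι → F} {i j : ι} (hj : j ∉ s)
    (hij : b j ≠ b i) :
    (b j - b i) * hypoexpCoeff (insert j s) b i = b j * hypoexpCoeff s b i := by
  have hne : j ≠ i := fun h ↦ hij (congrArg b h)
  rw [hypoexpCoeff, hypoexpCoeff, erase_insert_of_ne hne,
    prod_insert fun h ↦ hj (mem_of_mem_erase h)]
  field_simp [sub_ne_zero.2 hij]

-- The sum is, up to the factor `∏ bₖ`, the coefficient of degree `#s - 1` of the Lagrange
-- interpolant of the constant polynomial `1` at the nodes `-bᵢ`.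
lemma sum_hypoexpCoeff_eq_zero {s : Finset ι} {b : ι → F} (hb : Set.InjOn b s) (hs : 1 < #s) :
    ∑ i ∈ s, hypoexpCoeff s b i = 0 := by
  have top_coeff := Lagrange.coeff_eq_sum (F := F) (P := 1) (neg_injective.comp_injOn hb)
    (by rw [Polynomial.degree_one]; exact_mod_cast zero_lt_one.trans hs)
  rw [Polynomial.coeff_one, if_neg (Nat.sub_pos_of_lt hs).ne'] at top_coeff
  have factor (i : ι) (hi : i ∈ s) : hypoexpCoeff s b i =
      (∏ k ∈ s, b k) * (Polynomial.eval (-b i) 1 / ∏ k ∈ s.erase i, (-b i - -b k)) := by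
    rw [hypoexpCoeff, prod_div_distrib, ← mul_prod_erase s b hi, Polynomial.eval_one, mul_one_div,
      mul_div_assoc]
    simp only [neg_sub_neg]
  rw [sum_congr rfl factor, ← mul_sum]
  exact mul_eq_zero_of_right _ top_coeff.symm

lemma sum_hypoexpCoeff_insert_mul {s : Finset ι} {b : ι → F} {j : ι} (hj : j ∉ s)
    (hs : s.Nonempty) (hb : Set.InjOn b (insert j s : Finset ι)) (y : ι → F) (r : F) :
    ∑ i ∈ insert j s, hypoexpCoeff (insert j s) b i * (r - b i * y i) =
      b j * (∑ i ∈ s, hypoexpCoeff s b i * y i -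
        ∑ i ∈ insert j s, hypoexpCoeff (insert j s) b i * y i) := by
  have coeff_sum : ∑ i ∈ insert j s, hypoexpCoeff (insert j s) b i = 0 := by
    refine sum_hypoexpCoeff_eq_zero hb ?_
    rw [card_insert_of_notMem hj]
    exact Nat.succ_lt_succ hs.card_pos
  have recurrence : b j * ∑ i ∈ s, hypoexpCoeff s b i * y i =
      ∑ i ∈ insert j s, (b j - b i) * hypoexpCoeff (insert j s) b i * y i := by
    rw [sum_insert hj, sub_self, zero_mul, zero_mul, zero_add, mul_sum]
    refine sum_congr rfl fun i hi ↦ ?_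
    have hij : b j ≠ b i := fun h ↦ hj <|
      hb (mem_insert_self j s) (mem_insert_of_mem hi) h ▸ hi
    rw [sub_mul_hypoexpCoeff_insert hj hij, mul_assoc]
  calc ∑ i ∈ insert j s, hypoexpCoeff (insert j s) b i * (r - b i * y i)
      = r * ∑ i ∈ insert j s, hypoexpCoeff (insert j s) b i -
          ∑ i ∈ insert j s, hypoexpCoeff (insert j s) b i * (b i * y i) := by
        rw [mul_sum, ← sum_sub_distrib]
        exact sum_congr rfl fun i _ ↦ by ring
    _ = _ := by
        rw [coeff_sum, mul_sub, recurrence, mul_sum, ← sum_sub_distrib, mul_zero, zero_sub,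
          ← sum_neg_distrib]
        exact sum_congr rfl fun i _ ↦ by ring

end HypoexponentialKernel

section MemoryChain

/-- The convolution on `[0, t]` of `v` with the exponential kernel `t ↦ e^{-βt}`. -/
noncomputable def expConv (β : ℝ) (v : ℝ → ℝ) (t : ℝ) : ℝ :=
  ∫ s in (0 : ℝ)..t, Real.exp (-β * (t - s)) * v s

/-- The convolution on `[0, t]` of `v` with the hypoexponential kernel with rates
`(bₖ)_{k ∈ s}`. -/
noncomputable def hypoexpConv {ι : Type*} [DecidableEq ι] (s : Finset ι) (b : ι → ℝ) (v : ℝ → ℝ)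
    (t : ℝ) : ℝ :=
  ∑ i ∈ s, hypoexpCoeff s b i * expConv (b i) v t

/-- The solution `u` of the memory equation together with its hypoexponential convolutions. -/
noncomputable def memoryChain (b : ℕ → ℝ) (u : ℝ → ℝ) : ℕ → ℝ → ℝ
  | 0 => u
  | j + 1 => hypoexpConv (Icc 1 (j + 1)) b u

/-- The memory kernel `K = ∑ⱼ aⱼ Kⱼ`. -/
noncomputable def memoryKernel (N : ℕ) (a b : ℕ → ℝ) (t : ℝ) : ℝ :=
  ∑ j ∈ Icc 1 N, a j * ∑ i ∈ Icc 1 j, hypoexpCoeff (Icc 1 j) b i * Real.exp (-(b i) * t)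

lemma expConv_eq_exp_mul_integral (β : ℝ) (v : ℝ → ℝ) (t : ℝ) :
    expConv β v t = Real.exp (-β * t) * ∫ s in (0 : ℝ)..t, Real.exp (β * s) * v s := by
  rw [expConv, ← intervalIntegral.integral_const_mul]
  congr 1 with s
  rw [← mul_assoc, ← Real.exp_add]
  ring_nf

lemma hasDerivWithinAt_integral_Ici {g : ℝ → ℝ} {c t : ℝ} (hg : ContinuousOn g (Set.Ici c))
    (ht : t ∈ Set.Ici c) :
    HasDerivWithinAt (fun t ↦ ∫ s in c..t, g s) (g t) (Set.Ici c) t := by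
  have ht' : t ∈ Set.Icc c (t + 1) := ⟨ht, (lt_add_one t).le⟩
  have : Fact (t ∈ Set.Icc c (t + 1)) := ⟨ht'⟩
  have hg' : ContinuousOn g (Set.Icc c (t + 1)) := hg.mono Set.Icc_subset_Ici_self
  refine (intervalIntegral.integral_hasDerivWithinAt_right (s := Set.Icc c (t + 1))
    (hg.mono ?_).intervalIntegrable
    (hg'.stronglyMeasurableAtFilter_nhdsWithin measurableSet_Icc t)
    (hg' t ht')).mono_of_mem_nhdsWithin ?_
  · rw [Set.uIcc_of_le ht]
    exact Set.Icc_subset_Ici_self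
  · rw [← Set.Ici_inter_Iic]
    exact inter_mem_nhdsWithin _ (Iic_mem_nhds (lt_add_one t))

lemma hasDerivWithinAt_expConv {v : ℝ → ℝ} (hv : ContinuousOn v (Set.Ici 0)) (β : ℝ) {t : ℝ}
    (ht : t ∈ Set.Ici 0) :
    HasDerivWithinAt (expConv β v) (v t - β * expConv β v t) (Set.Ici 0) t := by
  have integral_deriv := hasDerivWithinAt_integral_Ici (g := fun s ↦ Real.exp (β * s) * v s)
    (by fun_prop) ht
  have exp_deriv : HasDerivAt (fun t ↦ Real.exp (-β * t)) (Real.exp (-β * t) * -β) t :=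
    ((hasDerivAt_id t).const_mul (-β)).exp.congr_deriv (by rw [mul_one, id])
  have exp_cancel : Real.exp (-β * t) * (Real.exp (β * t) * v t) = v t := by
    rw [← mul_assoc, ← Real.exp_add, neg_mul, neg_add_cancel, Real.exp_zero, one_mul]
  rw [funext (expConv_eq_exp_mul_integral β v)]
  refine (exp_deriv.hasDerivWithinAt.mul integral_deriv).congr_deriv ?_
  rw [exp_cancel]
  ring

lemma hasDerivWithinAt_hypoexpConv {ι : Type*} [DecidableEq ι] (s : Finset ι) (b : ι → ℝ)
    {v : ℝ → ℝ} (hv : ContinuousOn v (Set.Ici 0)) {t : ℝ} (ht : t ∈ Set.Ici 0) :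
    HasDerivWithinAt (hypoexpConv s b v)
      (∑ i ∈ s, hypoexpCoeff s b i * (v t - b i * expConv (b i) v t)) (Set.Ici 0) t :=
  HasDerivWithinAt.fun_sum fun i _ ↦ (hasDerivWithinAt_expConv hv (b i) ht).const_mul _

lemma hasDerivWithinAt_memoryChain_succ {b : ℕ → ℝ} {u : ℝ → ℝ} (hu : ContinuousOn u (Set.Ici 0))
    {m : ℕ} (hb : Set.InjOn b (Icc 1 (m + 1))) {t : ℝ} (ht : t ∈ Set.Ici 0) :
    HasDerivWithinAt (memoryChain b u (m + 1))
      (b (m + 1) * (memoryChain b u m t - memoryChain b u (m + 1) t)) (Set.Ici 0) t := by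
  refine (hasDerivWithinAt_hypoexpConv _ b hu ht).congr_deriv ?_
  cases m with
  | zero => simp [memoryChain, hypoexpConv, hypoexpCoeff]
  | succ m =>
    have hIcc : insert (m + 2) (Icc 1 (m + 1)) = Icc 1 (m + 2) :=
      insert_Icc_right_eq_Icc_succ (Nat.le_add_left 1 (m + 1))
    simp only [memoryChain, hypoexpConv]
    rw [← hIcc] at hb ⊢
    exact sum_hypoexpCoeff_insert_mul (by simp) ⟨1, by simp⟩ hb _ _

lemma integral_memoryKernel_mul (N : ℕ) (a b : ℕ → ℝ) {u : ℝ → ℝ}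
    (hu : ContinuousOn u (Set.Ici 0)) {t : ℝ} (ht : t ∈ Set.Ici 0) :
    ∫ s in (0 : ℝ)..t, memoryKernel N a b (t - s) * u s =
      ∑ j ∈ Icc 1 N, a j * memoryChain b u j t := by
  have u_cont : ContinuousOn u (Set.uIcc 0 t) := by
    rw [Set.uIcc_of_le ht]
    exact hu.mono Set.Icc_subset_Ici_self
  have kernel_conv (j : ℕ) : ∫ s in (0 : ℝ)..t,
      (∑ i ∈ Icc 1 j, hypoexpCoeff (Icc 1 j) b i * Real.exp (-(b i) * (t - s))) * u s =
        hypoexpConv (Icc 1 j) b u t := by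
    simp only [sum_mul, mul_assoc]
    rw [intervalIntegral.integral_finsetSum fun i _ ↦ ContinuousOn.intervalIntegrable (by fun_prop)]
    simp only [intervalIntegral.integral_const_mul, hypoexpConv, expConv]
  simp only [memoryKernel, sum_mul (Icc 1 N), mul_assoc]
  rw [intervalIntegral.integral_finsetSum fun j _ ↦ ContinuousOn.intervalIntegrable (by fun_prop)]
  refine sum_congr rfl fun j hj ↦ ?_
  rw [intervalIntegral.integral_const_mul, kernel_conv]
  obtain ⟨m, rfl⟩ := Nat.exists_eq_add_of_le' (mem_Icc.1 hj).1
  rfl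

lemma isChainSolution_memoryChain {N : ℕ} {a b : ℕ → ℝ} {u : ℝ → ℝ} (hb : Set.InjOn b (Icc 1 N))
    (hu : ∀ t ∈ Set.Ici (0 : ℝ), HasDerivWithinAt u (-(∑ k ∈ Icc 1 N, a k) * u t +
      ∫ s in (0 : ℝ)..t, memoryKernel N a b (t - s) * u s) (Set.Ici 0) t) :
    IsChainSolution N a b (memoryChain b u) := by
  have u_cont : ContinuousOn u (Set.Ici 0) := fun t ht ↦ (hu t ht).continuousWithinAt
  intro i hi t ht
  cases i with
  | zero =>
    refine (hu t ht).congr_deriv ?_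
    rw [integral_memoryKernel_mul N a b u_cont ht]
    simp only [chainGenerator, memoryChain, mul_sub, sum_sub_distrib, ← sum_mul]
    ring
  | succ m =>
    have hm : m + 1 ≤ N := Nat.lt_succ_iff.1 (mem_range.1 hi)
    exact hasDerivWithinAt_memoryChain_succ u_cont
      (hb.mono (coe_subset.2 (Icc_subset_Icc_right hm))) ht

lemma sum_chainWeight_mul_memoryChain_zero (N : ℕ) (a b : ℕ → ℝ) (u : ℝ → ℝ) :
    ∑ i ∈ range (N + 1), chainWeight N a b i * memoryChain b u i 0 = u 0 := by
  rw [sum_chainWeight_mul_eq_add N a b fun i ↦ memoryChain b u i 0]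
  simp [memoryChain, hypoexpConv, expConv]

end MemoryChain

/-- **Asymptotic behavior of the memory equation.**  The solution of the memory equation with
kernel `K(t) = ∑ⱼ aⱼ Kⱼ(t)` converges to the equilibrium value `u₀ / Z`. -/
theorem stmt_3 (N : ℕ) (hN : 1 ≤ N) (a b : ℕ → ℝ) (u₀ : ℝ)
    (ha : ∀ j ∈ Finset.Icc 1 N, 0 ≤ a j)
    (hb : ∀ j ∈ Finset.Icc 1 N, 0 < b j)
    (hbd : ∀ i ∈ Finset.Icc 1 N, ∀ j ∈ Finset.Icc 1 N, i ≠ j → b i ≠ b j)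
    (K : ℝ → ℝ)
    (hK : K = fun t => ∑ j ∈ Finset.Icc 1 N, a j *
      ∑ i ∈ Finset.Icc 1 j, b i * (∏ k ∈ (Finset.Icc 1 j).erase i, b k / (b k - b i)) *
        Real.exp (-(b i) * t))
    (u : ℝ → ℝ)
    (hu : ∀ t : ℝ, 0 ≤ t →
      HasDerivAt u (-(∑ k ∈ Finset.Icc 1 N, a k) * u t + ∫ s in (0:ℝ)..t, K (t - s) * u s) t)
    (hu0 : u 0 = u₀)
    (Z : ℝ)
    (hZ : Z = 1 + ∑ i ∈ Finset.Icc 1 N, (1 / b i) * ∑ j ∈ Finset.Icc i N, a j) :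
    Filter.Tendsto u Filter.atTop (nhds (u₀ / Z)) := by
  have b_injOn : Set.InjOn b (Icc 1 N) := fun i hi j hj hij ↦
    of_not_not fun hne ↦ hbd i hi j hj hne hij
  have u_deriv : ∀ t ∈ Set.Ici (0 : ℝ), HasDerivWithinAt u (-(∑ k ∈ Icc 1 N, a k) * u t +
      ∫ s in (0 : ℝ)..t, memoryKernel N a b (t - s) * u s) (Set.Ici 0) t := by
    subst hK
    exact fun t ht ↦ (hu t ht).hasDerivWithinAt
  have mass_eq : ∑ i ∈ range (N + 1), chainWeight N a b i = Z :=
    (sum_chainWeight N a b).trans hZ.symm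
  have Z_pos : 0 < Z := mass_eq ▸ sum_chainWeight_pos ha hb
  have mean_eq : ∑ i ∈ range (N + 1), chainWeight N a b i * memoryChain b u i 0 =
      (∑ i ∈ range (N + 1), chainWeight N a b i) * (u₀ / Z) := by
    rw [sum_chainWeight_mul_memoryChain_zero, hu0, mass_eq, mul_div_cancel₀ _ Z_pos.ne']
  exact (isChainSolution_memoryChain b_injOn u_deriv).tendsto_head ha hb mean_eq
end
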